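/- The monoid T is finite, and its cardinality satisfies |T| ≤ Σ_{k=0}^{⌊n/2⌋} (n!)² / (2^{2k}·(k!)²·(n−2k)!) (each quotient being an exact natural-number division). -/

import Mathlib

/-!
The Brauer monoid presentation from Kudryavtseva–Mazorchuk,
"On presentations of Brauer-type monoids", Section 3.

Generators: `Sum.inl i` represents `σ_{i+1}` and `Sum.inr i` represents `θ_{i+1}`
for `i : Fin (n-1)` (so the paper's indices `1, …, n-1` correspond to `i.val + 1`).
-/

/-- Generator type: `Sum.inl i` is `σ_{i+1}`, `Sum.inr i` is `θ_{i+1}`. -/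
abbrev BrauerGen (n : ℕ) := Fin (n - 1) ⊕ Fin (n - 1)

/-- The word `σ_{i+1}` in the free monoid. -/
def fσ {n : ℕ} (i : Fin (n - 1)) : FreeMonoid (BrauerGen n) := FreeMonoid.of (Sum.inl i)

/-- The word `θ_{i+1}` in the free monoid. -/
def fθ {n : ℕ} (i : Fin (n - 1)) : FreeMonoid (BrauerGen n) := FreeMonoid.of (Sum.inr i)

/-- The defining relations of the presentation of the Brauer monoid `𝔅_n`. -/
inductive BrauerRel (n : ℕ) : FreeMonoid (BrauerGen n) → FreeMonoid (BrauerGen n) → Prop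
  | sigma_sq (i) : BrauerRel n (fσ i * fσ i) 1
  | sigma_comm (i j) (h : 1 < Nat.dist i.1 j.1) : BrauerRel n (fσ i * fσ j) (fσ j * fσ i)
  | braid (i j) (h : Nat.dist i.1 j.1 = 1) :
      BrauerRel n (fσ i * fσ j * fσ i) (fσ j * fσ i * fσ j)
  | theta_idem (i) : BrauerRel n (fθ i * fθ i) (fθ i)
  | theta_comm (i j) (h : 1 < Nat.dist i.1 j.1) : BrauerRel n (fθ i * fθ j) (fθ j * fθ i)
  | theta_theta_theta (i j) (h : Nat.dist i.1 j.1 = 1) :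
      BrauerRel n (fθ i * fθ j * fθ i) (fθ i)
  | theta_sigma (i) : BrauerRel n (fθ i * fσ i) (fθ i)
  | sigma_theta (i) : BrauerRel n (fσ i * fθ i) (fθ i)
  | theta_sigma_comm (i j) (h : 1 < Nat.dist i.1 j.1) :
      BrauerRel n (fθ i * fσ j) (fσ j * fθ i)
  | sigma_theta_theta (i j) (h : Nat.dist i.1 j.1 = 1) :
      BrauerRel n (fσ i * fθ j * fθ i) (fσ j * fθ i)
  | theta_theta_sigma (i j) (h : Nat.dist i.1 j.1 = 1) :
      BrauerRel n (fθ i * fθ j * fσ i) (fθ i * fσ j)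

/-- The monoid `T` given by the presentation above. -/
abbrev BrauerMonoid (n : ℕ) := PresentedMonoid (BrauerRel n)

/-- The generator `σ_{i+1}` of `T`. -/
def σB {n : ℕ} (i : Fin (n - 1)) : BrauerMonoid n := PresentedMonoid.of (BrauerRel n) (Sum.inl i)

/-- The generator `θ_{i+1}` of `T`. -/
def θB {n : ℕ} (i : Fin (n - 1)) : BrauerMonoid n := PresentedMonoid.of (BrauerRel n) (Sum.inr i)

/-- The point `i` of `{1, …, n}` (0-based: `i.val`). -/
def lo {n : ℕ} (i : Fin (n - 1)) : Fin n := ⟨i.1, by have := i.2; omega⟩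

/-- The point `i + 1` of `{1, …, n}` (0-based: `i.val + 1`). -/
def hi {n : ℕ} (i : Fin (n - 1)) : Fin n := ⟨i.1 + 1, by have := i.2; omega⟩

/-- The adjacent transposition `s_{i+1} = (i+1, i+2)` of the symmetric group on `{1, …, n}`. -/
def sPerm {n : ℕ} (i : Fin (n - 1)) : Equiv.Perm (Fin n) := Equiv.swap (lo i) (hi i)

section BrauerAux
open Equiv

structure BCox {M : Type*} [Monoid M] (m : ℕ) (s : ℕ → M) : Prop where
  sq : ∀ i, i < m → s i * s i = 1
  comm : ∀ i j, i + 1 < j → j < m → s i * s j = s j * s i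
  braid : ∀ i, i + 1 < m → s i * s (i+1) * s i = s (i+1) * s i * s (i+1)

def bD {M : Type*} [Monoid M] (s : ℕ → M) (m : ℕ) : ℕ → M
  | 0 => 1
  | r+1 => bD s m r * s (m - r)

theorem bD_comm {M : Type*} [Monoid M] {s : ℕ → M} {m N : ℕ} (h : BCox N s) (hm : m < N) (i r : ℕ)
    (hi : i + r < m) : bD s m r * s i = s i * bD s m r := by
  induction r with
  | zero => simp [bD]
  | succ r ih =>
    rw [bD, mul_assoc, ← h.comm i (m - r) (by omega) (by omega), ← mul_assoc, ih (by omega), mul_assoc]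

theorem bD_shift {M : Type*} [Monoid M] {s : ℕ → M} {m N : ℕ} (h : BCox N s) (hm : m < N) (i r : ℕ)
    (hr : r ≤ m + 1) (him : i ≤ m)
    (hi : m + 1 < i + r) : bD s m r * s i = s (i-1) * bD s m r := by
  induction r with
  | zero => omega
  | succ r ih =>
    by_cases h1 : m + 1 < i + r
    · rw [bD, mul_assoc, h.comm (m - r) i (by omega) (by omega), ← mul_assoc,
        ih (by omega) h1, mul_assoc]
    · obtain ⟨q, rfl⟩ : ∃ q, r = q + 1 := ⟨r - 1, by omega⟩
      obtain ⟨j, rfl⟩ : ∃ j, i = j + 1 := ⟨i - 1, by omega⟩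
      have e1 : m - (q+1) = j := by omega
      have e2 : m - q = j + 1 := by omega
      rw [bD, bD, e1, e2, mul_assoc, mul_assoc, ← mul_assoc (s (j+1)), ← h.braid j (by omega),
        ← mul_assoc, ← mul_assoc, bD_comm h hm j q (by omega)]
      simp [mul_assoc]

open Classical in
noncomputable def bA {M : Type*} [Monoid M] (s : ℕ → M) : ℕ → Finset M
  | 0 => {1}
  | m+1 => ((bA s m) ×ˢ Finset.range (m+2)).image (fun p => p.1 * bD s m p.2)

theorem bA_card {M : Type*} [Monoid M] (s : ℕ → M) (m : ℕ) :
    (bA s m).card ≤ (m+1).factorial := by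
  classical
  induction m with
  | zero => simp [bA]
  | succ m ih =>
    rw [bA]
    refine Finset.card_image_le.trans ?_
    rw [Finset.card_product, Finset.card_range, Nat.factorial_succ (m+1), mul_comm]
    exact Nat.mul_le_mul_left _ ih

theorem bA_one {M : Type*} [Monoid M] (s : ℕ → M) (m : ℕ) : 1 ∈ bA s m := by
  classical
  induction m with
  | zero => simp [bA]
  | succ m ih =>
    rw [bA, Finset.mem_image]
    exact ⟨(1, 0), by simp [ih], by simp [bD]⟩

theorem bA_mul {M : Type*} [Monoid M] {s : ℕ → M} {N : ℕ} (h : BCox N s) (m : ℕ) (hm : m ≤ N)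
    (x : M) (hx : x ∈ bA s m) (i : ℕ) (hi : i < m) : x * s i ∈ bA s m := by
  classical
  induction m generalizing x i with
  | zero => omega
  | succ m ih =>
    rw [bA, Finset.mem_image] at hx ⊢
    obtain ⟨⟨y, r⟩, hy, rfl⟩ := hx
    simp only [Finset.mem_product, Finset.mem_range] at hy
    obtain ⟨hy, hr⟩ := hy
    simp only
    rcases lt_trichotomy (i + r) m with h1 | h1 | h1
    · refine ⟨(y * s i, r), ?_, ?_⟩
      · simp only [Finset.mem_product, Finset.mem_range]
        exact ⟨ih (by omega) y hy i (by omega), hr⟩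
      · simp only
        rw [mul_assoc, mul_assoc, bD_comm h (by omega) i r h1]
    · refine ⟨(y, r+1), ?_, ?_⟩
      · simp only [Finset.mem_product, Finset.mem_range]
        exact ⟨hy, by omega⟩
      · simp only [bD]
        rw [show m - r = i by omega, mul_assoc]
    · by_cases h2 : i + r = m + 1
      · obtain ⟨q, rfl⟩ : ∃ q, r = q + 1 := ⟨r - 1, by omega⟩
        refine ⟨(y, q), ?_, ?_⟩
        · simp only [Finset.mem_product, Finset.mem_range]
          exact ⟨hy, by omega⟩
        · simp only [bD]
          rw [show m - q = i by omega, mul_assoc, mul_assoc, h.sq i (by omega), mul_one]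
      · refine ⟨(y * s (i-1), r), ?_, ?_⟩
        · simp only [Finset.mem_product, Finset.mem_range]
          exact ⟨ih (by omega) y hy (i-1) (by omega), hr⟩
        · simp only
          rw [mul_assoc, mul_assoc, bD_shift h (by omega) i r (by omega) (by omega) (by omega)]

def bpt (m i : ℕ) : Fin (m+1) := Fin.ofNat (m+1) i

theorem bpt_val {m i : ℕ} (h : i < m + 1) : (bpt m i).val = i := by
  simp [bpt, Fin.ofNat, Nat.mod_eq_of_lt h]

theorem bpt_self {m : ℕ} (a : Fin (m+1)) : bpt m a.val = a := by
  apply Fin.ext; rw [bpt_val a.2]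

theorem bpt_ne {m i j : ℕ} (hi : i < m + 1) (hj : j < m + 1) (h : i ≠ j) : bpt m i ≠ bpt m j := by
  intro e
  have := congrArg Fin.val e
  rw [bpt_val hi, bpt_val hj] at this
  exact h this

def bsw (m i : ℕ) : Perm (Fin (m+1)) := swap (bpt m i) (bpt m (i+1))

theorem bswap_comm {α : Type*} [DecidableEq α] {a b c d : α} (h1 : a ≠ c) (h2 : a ≠ d) (h3 : b ≠ c)
    (h4 : b ≠ d) : swap a b * swap c d = swap c d * swap a b := by
  ext x
  simp only [Perm.mul_apply, swap_apply_def]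
  grind

theorem bswap_braid {α : Type*} [DecidableEq α] {a b c : α} (h1 : a ≠ b) (h2 : a ≠ c) (h3 : b ≠ c) :
    swap a b * swap b c * swap a b = swap b c * swap a b * swap b c := by
  ext x
  simp only [Perm.mul_apply, swap_apply_def]
  grind

theorem bsw_cox (m : ℕ) : BCox m (bsw m) where
  sq i hi := by simp [bsw]
  comm i j h1 h2 := bswap_comm (bpt_ne (by omega) (by omega) (by omega))
    (bpt_ne (by omega) (by omega) (by omega)) (bpt_ne (by omega) (by omega) (by omega))
    (bpt_ne (by omega) (by omega) (by omega))
  braid i h := bswap_braid (bpt_ne (by omega) (by omega) (by omega))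
    (bpt_ne (by omega) (by omega) (by omega)) (bpt_ne (by omega) (by omega) (by omega))

theorem bsw_closure (m : ℕ) : Submonoid.closure {g | ∃ i, i < m ∧ g = bsw m i} = ⊤ := by
  rw [← Perm.mclosure_swap_castSucc_succ m]
  congr 1
  ext g
  constructor
  · rintro ⟨i, hi, rfl⟩
    refine ⟨⟨i, hi⟩, ?_⟩
    simp only [bsw]
    congr 1 <;> apply Fin.ext <;> rw [bpt_val (by omega)] <;> simp
  · rintro ⟨i, rfl⟩
    refine ⟨i, i.2, ?_⟩
    simp only [bsw]
    congr 1 <;> apply Fin.ext <;> rw [bpt_val (by omega)] <;> simp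

theorem bhom_exists {M : Type*} [Monoid M] {m : ℕ} {s : ℕ → M} (h : BCox m s) :
    ∃ φ : Perm (Fin (m+1)) →* M, ∀ i, i < m → φ (bsw m i) = s i := by
  classical
  let p : ℕ → M × Perm (Fin (m+1)) := fun i => (s i, bsw m i)
  have hp : BCox m p := by
    have h' := bsw_cox m
    refine ⟨fun i hi => ?_, fun i j h1 h2 => ?_, fun i hi => ?_⟩
    · exact Prod.ext (h.sq i hi) (h'.sq i hi)
    · exact Prod.ext (h.comm i j h1 h2) (h'.comm i j h1 h2)
    · exact Prod.ext (h.braid i hi) (h'.braid i hi)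
  let K : Submonoid (M × Perm (Fin (m+1))) := Submonoid.closure {g | ∃ i, i < m ∧ g = p i}
  have hK : (K : Set (M × Perm (Fin (m+1)))) ⊆ ((bA p m : Finset _) : Set (M × Perm (Fin (m+1)))) := by
    intro x hx
    induction hx using Submonoid.closure_induction_right with
    | one => exact bA_one p m
    | mul_right x hx y hy hxA =>
      obtain ⟨i, hi, rfl⟩ := hy
      exact bA_mul hp m le_rfl x hxA i hi
  have hfin : Finite K := (Finset.finite_toSet _).subset hK
  have hcard : Nat.card K ≤ (m+1).factorial := by
    refine le_trans ?_ (bA_card p m)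
    have := Set.ncard_le_ncard hK (Finset.finite_toSet _)
    rw [Set.ncard_coe_finset] at this
    exact this
  let π : K →* Perm (Fin (m+1)) := (MonoidHom.snd _ _).comp K.subtype
  have hsurj : Function.Surjective π := by
    intro g
    have hg : g ∈ K.map (MonoidHom.snd _ _) := by
      rw [MonoidHom.map_mclosure]
      have : (MonoidHom.snd M (Perm (Fin (m+1)))) '' {g | ∃ i, i < m ∧ g = p i}
          = {g | ∃ i, i < m ∧ g = bsw m i} := by
        ext g
        constructor
        · rintro ⟨_, ⟨i, hi, rfl⟩, rfl⟩
          exact ⟨i, hi, rfl⟩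
        · rintro ⟨i, hi, rfl⟩
          exact ⟨_, ⟨i, hi, rfl⟩, rfl⟩
      rw [this, bsw_closure]
      trivial
    obtain ⟨x, hx, rfl⟩ := hg
    exact ⟨⟨x, hx⟩, rfl⟩
  have hbij : Function.Bijective π := by
    have := Fintype.ofFinite K
    rw [Fintype.bijective_iff_surjective_and_card]
    refine ⟨hsurj, le_antisymm ?_ (Fintype.card_le_of_surjective _ hsurj)⟩
    rw [Fintype.card_perm, Fintype.card_fin, ← Nat.card_eq_fintype_card]
    exact hcard
  let e := MulEquiv.ofBijective π hbij
  refine ⟨((MonoidHom.fst _ _).comp K.subtype).comp e.symm.toMonoidHom, fun i hi => ?_⟩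
  have : e.symm (bsw m i) = ⟨p i, Submonoid.subset_closure ⟨i, hi, rfl⟩⟩ := by
    rw [MulEquiv.symm_apply_eq]
    rfl
  simp [this, p]

structure BRel {M : Type*} [Monoid M] (N : ℕ) (s t : ℕ → M) : Prop extends BCox N s where
  tt : ∀ i, i < N → t i * t i = t i
  tc : ∀ i j, i + 1 < j → j < N → t i * t j = t j * t i
  ts : ∀ i, i < N → t i * s i = t i
  st : ∀ i, i < N → s i * t i = t i
  tsc : ∀ i j, (i + 1 < j ∨ j + 1 < i) → i < N → j < N → t i * s j = s j * t i
  ttt : ∀ i j, (i + 1 = j ∨ j + 1 = i) → i < N → j < N → t i * t j * t i = t i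
  stt : ∀ i j, (i + 1 = j ∨ j + 1 = i) → i < N → j < N → s i * t j * t i = s j * t i
  tts : ∀ i j, (i + 1 = j ∨ j + 1 = i) → i < N → j < N → t i * t j * s i = t i * s j

theorem BRel.sts {M : Type*} [Monoid M] {N : ℕ} {s t : ℕ → M} (h : BRel N s t) (i j : ℕ)
    (hij : i + 1 = j ∨ j + 1 = i) (hi : i < N) (hj : j < N) :
    s j * t i * s j = s i * t j * s i := by
  calc s j * t i * s j = s i * t j * (t i * s j) := by rw [← h.stt i j hij hi hj, mul_assoc]
    _ = s i * (t j * t i * t j) * s i := by rw [← h.tts i j hij hi hj]; simp only [mul_assoc]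
    _ = s i * t j * s i := by rw [h.ttt j i (by omega) hj hi]

theorem bperm_ext {α : Type*} [DecidableEq α] [Finite α] {k : ℕ} (f f' : Fin k → α)
    (hf : Function.Injective f) (hf' : Function.Injective f') : ∃ g : Perm α, ∀ i, g (f i) = f' i := by
  obtain ⟨g, hg⟩ := (Equiv.Perm.isMultiplyPretransitive α k).exists_smul_eq ⟨f, hf⟩ ⟨f', hf'⟩
  exact ⟨g, fun i => congrFun (congrArg (fun e : Fin k ↪ α => (e : Fin k → α)) hg) i⟩

structure BTh {M : Type*} [Monoid M] {N : ℕ} (φ : Perm (Fin (N+1)) →* M)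
    (th : Fin (N+1) → Fin (N+1) → M) : Prop where
  conj : ∀ g a b, a ≠ b → φ g * th a b = th (g a) (g b) * φ g
  symm : ∀ a b, a ≠ b → th a b = th b a
  idem : ∀ a b, a ≠ b → th a b * th a b = th a b
  left : ∀ a b, a ≠ b → φ (swap a b) * th a b = th a b
  comm : ∀ a b c d, a ≠ b → a ≠ c → a ≠ d → b ≠ c → b ≠ d → c ≠ d → th a b * th c d = th c d * th a b
  chain : ∀ a b c, a ≠ b → a ≠ c → b ≠ c → th b c * th a b = φ (swap a b * swap b c) * th a b

open Classical in
noncomputable def bth {M : Type*} [Monoid M] {N : ℕ} (φ : Perm (Fin (N+1)) →* M) (t0 : M)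
    (a b : Fin (N+1)) : M :=
  if h : ∃ g : Perm (Fin (N+1)), g (bpt N 0) = a ∧ g (bpt N 1) = b then
    φ h.choose * t0 * φ h.choose⁻¹ else 1

theorem bphi_inv {M G : Type*} [Monoid M] [Group G] (φ : G →* M) (g : G) : φ g * φ g⁻¹ = 1 := by
  rw [← map_mul]; simp

theorem bphi_inv' {M G : Type*} [Monoid M] [Group G] (φ : G →* M) (g : G) : φ g⁻¹ * φ g = 1 := by
  rw [← map_mul]; simp

theorem bcent_swap {M : Type*} [Monoid M] {N : ℕ} {s t : ℕ → M} (h : BRel N s t) (h0 : 0 < N)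
    (φ : Perm (Fin (N+1)) →* M) (hφ : ∀ i, i < N → φ (bsw N i) = s i) (i j : ℕ) (hi : 2 ≤ i)
    (hij : i < j) (hj : j ≤ N) : φ (swap (bpt N i) (bpt N j)) * t 0 = t 0 * φ (swap (bpt N i) (bpt N j)) := by
  induction j with
  | zero => omega
  | succ j ih =>
    have hs : φ (bsw N j) * t 0 = t 0 * φ (bsw N j) := by
      rw [hφ j (by omega), h.tsc 0 j (by omega) h0 (by omega)]
    by_cases e : i = j
    · subst e
      exact hs
    · have ih' := ih (by omega) (by omega)
      have e2 : swap (bpt N i) (bpt N (j+1)) = bsw N j * swap (bpt N i) (bpt N j) * bsw N j := by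
        have h1 := bpt_ne (m := N) (i := i) (j := j) (by omega) (by omega) (by omega)
        have h2 := bpt_ne (m := N) (i := i) (j := j+1) (by omega) (by omega) (by omega)
        have h3 := bpt_ne (m := N) (i := j) (j := j+1) (by omega) (by omega) (by omega)
        ext x
        simp only [bsw, Perm.mul_apply, swap_apply_def]
        grind
      rw [e2, map_mul, map_mul, mul_assoc, hs, ← mul_assoc, mul_assoc _ _ (t 0), ih', ← mul_assoc, hs]
      simp only [mul_assoc]

theorem bcent {M : Type*} [Monoid M] {N : ℕ} {s t : ℕ → M} (h : BRel N s t) (h0 : 0 < N)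
    (φ : Perm (Fin (N+1)) →* M) (hφ : ∀ i, i < N → φ (bsw N i) = s i) (g : Perm (Fin (N+1)))
    (g0 : g (bpt N 0) = bpt N 0) (g1 : g (bpt N 1) = bpt N 1) : φ g * t 0 = t 0 * φ g := by
  classical
  let p : Fin (N+1) → Prop := fun x => x ≠ bpt N 0 ∧ x ≠ bpt N 1
  let C : Submonoid (Perm {x // p x}) :=
    ((Submonoid.centralizer {t 0}).comap φ).comap (Perm.ofSubtype : Perm {x // p x} →* _)
  have hC : C = ⊤ := by
    rw [eq_top_iff, ← Perm.mclosure_isSwap, Submonoid.closure_le]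
    rintro _ ⟨⟨a, ha⟩, ⟨b, hb⟩, hab, rfl⟩
    simp only [C, SetLike.mem_coe, Submonoid.mem_comap, Perm.ofSubtype_swap_eq,
      Submonoid.mem_centralizer_iff, Set.mem_singleton_iff, forall_eq]
    have hv : ∀ c : Fin (N+1), p c → 2 ≤ c.val := by
      intro c hc
      by_contra hlt
      have : c.val = 0 ∨ c.val = 1 := by omega
      rcases this with e | e
      · exact hc.1 (by rw [← bpt_self c, e])
      · exact hc.2 (by rw [← bpt_self c, e])
    have hne : a.val ≠ b.val := by
      intro e; exact hab (Subtype.ext (Fin.ext e))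
    rcases lt_or_gt_of_ne hne with hl | hl
    · have := bcent_swap h h0 φ hφ a b (hv a ha) hl (by omega)
      rw [bpt_self, bpt_self] at this
      exact this.symm
    · have := bcent_swap h h0 φ hφ b a (hv b hb) hl (by omega)
      rw [bpt_self, bpt_self, swap_comm] at this
      exact this.symm
  have h1 : ∀ x, p (g x) ↔ p x := by
    intro x
    have e0 : g x = bpt N 0 ↔ x = bpt N 0 := by
      constructor
      · intro e; apply g.injective; rw [e, g0]
      · rintro rfl; exact g0
    have e1 : g x = bpt N 1 ↔ x = bpt N 1 := by
      constructor
      · intro e; apply g.injective; rw [e, g1]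
      · rintro rfl; exact g1
    simp only [p, ne_eq, e0, e1]
  have h2 : ∀ x, g x ≠ x → p x := by
    intro x hx
    constructor
    · rintro rfl; exact hx g0
    · rintro rfl; exact hx g1
  have hm : Perm.subtypePerm g h1 ∈ C := by rw [hC]; trivial
  simp only [C, Submonoid.mem_comap, Perm.ofSubtype_subtypePerm h1 h2,
      Submonoid.mem_centralizer_iff, Set.mem_singleton_iff, forall_eq] at hm
  exact hm.symm

theorem bth_eq {M : Type*} [Monoid M] {N : ℕ} {s t : ℕ → M} (h : BRel N s t) (h0 : 0 < N)
    (φ : Perm (Fin (N+1)) →* M) (hφ : ∀ i, i < N → φ (bsw N i) = s i) (g : Perm (Fin (N+1))) :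
    bth φ (t 0) (g (bpt N 0)) (g (bpt N 1)) = φ g * t 0 * φ g⁻¹ := by
  have hex : ∃ g' : Perm (Fin (N+1)), g' (bpt N 0) = g (bpt N 0) ∧ g' (bpt N 1) = g (bpt N 1) :=
    ⟨g, rfl, rfl⟩
  rw [bth, dif_pos hex]
  obtain ⟨e0, e1⟩ := hex.choose_spec
  generalize hex.choose = k at e0 e1
  have := bcent h h0 φ hφ (g⁻¹ * k) (by simp [e0]) (by simp [e1])
  rw [map_mul] at this
  calc φ k * t 0 * φ k⁻¹ = φ g * (φ g⁻¹ * φ k * t 0) * φ k⁻¹ := by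
        rw [← mul_assoc, ← mul_assoc, bphi_inv, one_mul]
    _ = φ g * t 0 * φ g⁻¹ * (φ k * φ k⁻¹) := by rw [this]; simp only [mul_assoc]
    _ = _ := by rw [bphi_inv, mul_one]

theorem binj2 {α : Type*} {a b : α} (h : a ≠ b) : Function.Injective ![a, b] := by
  intro i j; fin_cases i <;> fin_cases j <;> simp_all [eq_comm]

theorem binj3 {α : Type*} {a b c : α} (h : a ≠ b) (h2 : a ≠ c) (h3 : b ≠ c) :
    Function.Injective ![a, b, c] := by
  intro i j; fin_cases i <;> fin_cases j <;> simp_all [eq_comm]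

theorem binj4 {α : Type*} {a b c d : α} (h : a ≠ b) (h2 : a ≠ c) (h3 : a ≠ d) (h4 : b ≠ c)
    (h5 : b ≠ d) (h6 : c ≠ d) :
    Function.Injective ![a, b, c, d] := by
  intro i j; fin_cases i <;> fin_cases j <;> simp_all [eq_comm]

theorem bth_conj {M : Type*} [Monoid M] {N : ℕ} {s t : ℕ → M} (h : BRel N s t) (h0 : 0 < N)
    (φ : Perm (Fin (N+1)) →* M) (hφ : ∀ i, i < N → φ (bsw N i) = s i) (g : Perm (Fin (N+1)))
    (a b : Fin (N+1)) (hab : a ≠ b) :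
    bth φ (t 0) (g a) (g b) = φ g * bth φ (t 0) a b * φ g⁻¹ := by
  obtain ⟨k, hk⟩ := bperm_ext ![bpt N 0, bpt N 1] ![a, b]
    (binj2 (bpt_ne (by omega) (by omega) (by omega))) (binj2 hab)
  have k0 : k (bpt N 0) = a := hk 0
  have k1 : k (bpt N 1) = b := hk 1
  subst k0 k1
  have := bth_eq h h0 φ hφ (g * k)
  rw [Perm.mul_apply, Perm.mul_apply] at this
  rw [this, bth_eq h h0 φ hφ k]
  simp only [map_mul, mul_inv_rev, mul_assoc]

theorem bth_t {M : Type*} [Monoid M] {N : ℕ} {s t : ℕ → M} (h : BRel N s t) (h0 : 0 < N)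
    (φ : Perm (Fin (N+1)) →* M) (hφ : ∀ i, i < N → φ (bsw N i) = s i) (i : ℕ) (hi : i < N) :
    bth φ (t 0) (bpt N i) (bpt N (i+1)) = t i := by
  induction i with
  | zero => simpa using bth_eq h h0 φ hφ 1
  | succ i ih =>
    have h1 := bpt_ne (m := N) (i := i) (j := i+1) (by omega) (by omega) (by omega)
    have h2 := bpt_ne (m := N) (i := i) (j := i+1+1) (by omega) (by omega) (by omega)
    have h3 := bpt_ne (m := N) (i := i+1) (j := i+1+1) (by omega) (by omega) (by omega)
    have := bth_conj h h0 φ hφ (bsw N i * bsw N (i+1)) (bpt N i) (bpt N (i+1)) h1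
    have e1 : (bsw N i * bsw N (i+1)) (bpt N i) = bpt N (i+1) := by
      simp only [bsw, Perm.mul_apply, swap_apply_def]; grind
    have e2 : (bsw N i * bsw N (i+1)) (bpt N (i+1)) = bpt N (i+1+1) := by
      simp only [bsw, Perm.mul_apply, swap_apply_def]; grind
    have e3 : (bsw N i * bsw N (i+1))⁻¹ = bsw N (i+1) * bsw N i := by simp [bsw]
    rw [e1, e2, e3, ih (by omega), map_mul, map_mul, hφ i (by omega), hφ (i+1) hi] at this
    rw [this]
    calc s i * s (i+1) * t i * (s (i+1) * s i) = s i * (s (i+1) * t i * s (i+1)) * s i := by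
          simp only [mul_assoc]
      _ = (s i * s i) * t (i+1) * (s i * s i) := by
          rw [h.sts i (i+1) (by omega) (by omega) hi]; simp only [mul_assoc]
      _ = t (i+1) := by rw [h.sq i (by omega)]; simp

theorem bth_BTh {M : Type*} [Monoid M] {N : ℕ} {s t : ℕ → M} (h : BRel N s t) (h0 : 0 < N)
    (φ : Perm (Fin (N+1)) →* M) (hφ : ∀ i, i < N → φ (bsw N i) = s i) :
    BTh φ (bth φ (t 0)) := by
  have hc := bth_conj h h0 φ hφ
  have ht := bth_t h h0 φ hφ
  have base : ∀ a b : Fin (N+1), a ≠ b → ∃ k : Perm (Fin (N+1)), k (bpt N 0) = a ∧ k (bpt N 1) = b := by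
    intro a b hab
    obtain ⟨k, hk⟩ := bperm_ext ![bpt N 0, bpt N 1] ![a, b]
      (binj2 (bpt_ne (by omega) (by omega) (by omega))) (binj2 hab)
    exact ⟨k, hk 0, hk 1⟩
  have h01 : bpt N 0 ≠ bpt N 1 := bpt_ne (by omega) (by omega) (by omega)
  have key : ∀ k : Perm (Fin (N+1)), ∀ x y : M,
      (φ k * x * φ k⁻¹) * (φ k * y * φ k⁻¹) = φ k * (x * y) * φ k⁻¹ := by
    intro k x y
    calc _ = φ k * x * (φ k⁻¹ * φ k) * y * φ k⁻¹ := by simp only [mul_assoc]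
      _ = _ := by rw [bphi_inv']; simp only [mul_assoc, one_mul]
  have t0 : bth φ (t 0) (bpt N 0) (bpt N 1) = t 0 := ht 0 h0
  have hsw : ∀ (k : Perm (Fin (N+1))) (a b : Fin (N+1)), swap (k a) (k b) = k * swap a b * k⁻¹ := by
    intro k a b
    rw [Equiv.swap_apply_apply]
  refine ⟨?_, ?_, ?_, ?_, ?_, ?_⟩
  · intro g a b hab
    rw [hc g a b hab, mul_assoc, bphi_inv', mul_one]
  · intro a b hab
    obtain ⟨k, rfl, rfl⟩ := base a b hab
    rw [hc k _ _ h01, hc k _ _ h01.symm]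
    have := hc (bsw N 0) _ _ h01
    rw [show (bsw N 0) (bpt N 0) = bpt N 1 from swap_apply_left _ _,
      show (bsw N 0) (bpt N 1) = bpt N 0 from swap_apply_right _ _,
      show (bsw N 0)⁻¹ = bsw N 0 from swap_inv _ _, hφ 0 h0, t0, h.st 0 h0, h.ts 0 h0] at this
    rw [this, t0]
  · intro a b hab
    obtain ⟨k, rfl, rfl⟩ := base a b hab
    rw [hc k _ _ h01, key, t0, h.tt 0 h0]
  · intro a b hab
    obtain ⟨k, rfl, rfl⟩ := base a b hab
    rw [hc k _ _ h01, hsw, map_mul, map_mul, key, t0]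
    rw [show φ (swap (bpt N 0) (bpt N 1)) = s 0 from hφ 0 h0, h.st 0 h0]
  · intro a b c d ab ac ad bc bd cd
    have hN : 4 ≤ N + 1 := by
      have := Fintype.card_le_of_injective _ (binj4 ab ac ad bc bd cd)
      simpa using this
    obtain ⟨k, hk⟩ := bperm_ext ![bpt N 0, bpt N 1, bpt N 2, bpt N 3] ![a, b, c, d]
      (binj4 (bpt_ne (by omega) (by omega) (by omega)) (bpt_ne (by omega) (by omega) (by omega))
      (bpt_ne (by omega) (by omega) (by omega)) (bpt_ne (by omega) (by omega) (by omega))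
      (bpt_ne (by omega) (by omega) (by omega)) (bpt_ne (by omega) (by omega) (by omega)))
      (binj4 ab ac ad bc bd cd)
    have k0 : k (bpt N 0) = a := hk 0
    have k1 : k (bpt N 1) = b := hk 1
    have k2 : k (bpt N 2) = c := hk 2
    have k3 : k (bpt N 3) = d := hk 3
    have h23 : bpt N 2 ≠ bpt N 3 := bpt_ne (by omega) (by omega) (by omega)
    subst k0 k1 k2 k3
    rw [hc k _ _ h01, hc k _ _ h23, key, key, t0, ht 2 (by omega), h.tc 0 2 (by omega) (by omega)]
  · intro a b c ab ac bc
    have hN : 3 ≤ N + 1 := by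
      have := Fintype.card_le_of_injective _ (binj3 ab ac bc)
      simpa using this
    obtain ⟨k, hk⟩ := bperm_ext ![bpt N 0, bpt N 1, bpt N 2] ![a, b, c]
      (binj3 (bpt_ne (by omega) (by omega) (by omega)) (bpt_ne (by omega) (by omega) (by omega))
      (bpt_ne (by omega) (by omega) (by omega)))
      (binj3 ab ac bc)
    have k0 : k (bpt N 0) = a := hk 0
    have k1 : k (bpt N 1) = b := hk 1
    have k2 : k (bpt N 2) = c := hk 2
    have h12 : bpt N 1 ≠ bpt N 2 := bpt_ne (by omega) (by omega) (by omega)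
    subst k0 k1 k2
    have e : s 0 * (s 1 * t 0) = t 1 * t 0 := by
      rw [← h.stt 0 1 (by omega) (by omega) (by omega), ← mul_assoc, ← mul_assoc, h.sq 0 h0, one_mul]
    rw [hc k _ _ h01, hc k _ _ h12, hsw, hsw, key, t0, ht 1 (by omega),
      show k * swap (bpt N 0) (bpt N 1) * k⁻¹ * (k * swap (bpt N 1) (bpt N 2) * k⁻¹)
        = k * (swap (bpt N 0) (bpt N 1) * swap (bpt N 1) (bpt N 2)) * k⁻¹ by group,
      map_mul, map_mul, key, map_mul, show φ (swap (bpt N 0) (bpt N 1)) = s 0 from hφ 0 h0,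
      show φ (swap (bpt N 1) (bpt N 2)) = s 1 from hφ 1 (by omega), mul_assoc (s 0), e]

section bdelta
variable {M : Type*} [Monoid M] {N : ℕ} {φ : Perm (Fin (N+1)) →* M}
    {th : Fin (N+1) → Fin (N+1) → M}

def bT (th : Fin (N+1) → Fin (N+1) → M) (i : ℕ) : M := th (bpt N (2*i)) (bpt N (2*i+1))

def bdel (th : Fin (N+1) → Fin (N+1) → M) : ℕ → M
  | 0 => 1
  | k+1 => bdel th k * bT th k

theorem bdel_comm (k : ℕ) (z : M) (hz : ∀ i, i < k → z * bT th i = bT th i * z) :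
    z * bdel th k = bdel th k * z := by
  induction k with
  | zero => simp [bdel]
  | succ k ih =>
    rw [bdel, ← mul_assoc, ih (fun i hi => hz i (by omega)), mul_assoc, hz k (by omega), mul_assoc]

theorem bT_comm (h : BTh φ th) (i j : ℕ) (hi : 2 * i + 1 ≤ N) (hj : 2 * j + 1 ≤ N) :
    bT th i * bT th j = bT th j * bT th i := by
  by_cases e : i = j
  · rw [e]
  · apply h.comm <;> exact bpt_ne (by omega) (by omega) (by omega)

theorem bdel_absorb (h : BTh φ th) (k : ℕ) (hk : 2 * k ≤ N + 1) (i : ℕ) (hi : i < k) :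
    bT th i * bdel th k = bdel th k := by
  induction k with
  | zero => omega
  | succ k ih =>
    rw [bdel, ← mul_assoc]
    by_cases e : i = k
    · rw [e, bdel_comm k (bT th k) (fun j hj => bT_comm h _ _ (by omega) (by omega)), mul_assoc]
      congr 1
      exact h.idem _ _ (bpt_ne (by omega) (by omega) (by omega))
    · rw [ih (by omega) (by omega)]

theorem bdel_absorb' (h : BTh φ th) (k : ℕ) (hk : 2 * k ≤ N + 1) (i : ℕ) (hi : i < k) :
    bdel th k * bT th i = bdel th k := by
  rw [← bdel_comm k (bT th i) (fun j hj => bT_comm h _ _ (by omega) (by omega)),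
    bdel_absorb h k hk i hi]

def bLR (φ : Perm (Fin (N+1)) →* M) (d : M) : Subgroup (Perm (Fin (N+1))) where
  carrier := {g | φ g * d = d ∧ d * φ g = d}
  one_mem' := by simp
  mul_mem' := by
    rintro a b ⟨h1, h2⟩ ⟨h3, h4⟩
    simp only [Set.mem_ofPred_eq, map_mul]
    rw [mul_assoc, h3, h1, ← mul_assoc, h2, h4]
    exact ⟨rfl, rfl⟩
  inv_mem' := by
    rintro a ⟨h1, h2⟩
    constructor
    · conv_lhs => rw [← h1]
      rw [← mul_assoc, bphi_inv', one_mul]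
    · conv_lhs => rw [← h2]
      rw [mul_assoc, bphi_inv, mul_one]

theorem bLR_of {d X : M} {g : Perm (Fin (N+1))} (h1 : φ g * X = X) (h2 : φ g * X = X * φ g)
    (h3 : X * d = d) (h4 : d * X = d) : g ∈ bLR φ d := by
  constructor
  · rw [← h3, ← mul_assoc, h1]
  · rw [← h4, mul_assoc, ← h2, h1]

theorem bLR_flip (h : BTh φ th) (k : ℕ) (hk : 2 * k ≤ N + 1) (i : ℕ) (hi : i < k) :
    swap (bpt N (2*i)) (bpt N (2*i+1)) ∈ bLR φ (bdel th k) := by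
  have hne : bpt N (2*i) ≠ bpt N (2*i+1) := bpt_ne (by omega) (by omega) (by omega)
  refine bLR_of (X := bT th i) (h.left _ _ hne) ?_ (bdel_absorb h k hk i hi)
    (bdel_absorb' h k hk i hi)
  rw [bT, h.conj _ _ _ hne, swap_apply_left, swap_apply_right, h.symm _ _ hne]

theorem bth_block (h : BTh φ th) (a b c d : Fin (N+1)) (ab : a ≠ b) (ac : a ≠ c) (ad : a ≠ d)
    (bc : b ≠ c) (bd : b ≠ d) (cd : c ≠ d) :
    φ (swap a c * swap b d) * (th a b * th c d) = th a b * th c d := by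
  have h1 := h.chain a b c ab ac bc
  have h2 := h.chain d c b cd.symm bd.symm bc.symm
  rw [h.symm c b bc.symm, h.symm d c cd.symm] at h2
  have e1 : th b c * (th a b * th c d) = φ (swap a b * swap b c) * (th a b * th c d) := by
    rw [← mul_assoc, h1, mul_assoc]
  have e2 : th b c * (th a b * th c d) = φ (swap d c * swap c b) * (th a b * th c d) := by
    rw [h.comm a b c d ab ac ad bc bd cd, ← mul_assoc, h2, mul_assoc]
  rw [e1] at e2
  have e3 : swap a c * swap b d = (swap a b * swap b c)⁻¹ * (swap d c * swap c b) := by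
    rw [mul_inv_rev, swap_inv, swap_inv]
    ext x
    simp only [Perm.mul_apply, swap_apply_def]
    grind
  rw [e3, map_mul, mul_assoc, ← e2, ← mul_assoc, bphi_inv', one_mul]

theorem bLR_block (h : BTh φ th) (k : ℕ) (hk : 2 * k ≤ N + 1) (i j : ℕ) (hi : i < k) (hj : j < k)
    (hij : i ≠ j) :
    swap (bpt N (2*i)) (bpt N (2*j)) * swap (bpt N (2*i+1)) (bpt N (2*j+1))
      ∈ bLR φ (bdel th k) := by
  have ab : bpt N (2*i) ≠ bpt N (2*i+1) := bpt_ne (by omega) (by omega) (by omega)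
  have ac : bpt N (2*i) ≠ bpt N (2*j) := bpt_ne (by omega) (by omega) (by omega)
  have ad : bpt N (2*i) ≠ bpt N (2*j+1) := bpt_ne (by omega) (by omega) (by omega)
  have bc : bpt N (2*i+1) ≠ bpt N (2*j) := bpt_ne (by omega) (by omega) (by omega)
  have bd : bpt N (2*i+1) ≠ bpt N (2*j+1) := bpt_ne (by omega) (by omega) (by omega)
  have cd : bpt N (2*j) ≠ bpt N (2*j+1) := bpt_ne (by omega) (by omega) (by omega)
  refine bLR_of (X := bT th i * bT th j) (bth_block h _ _ _ _ ab ac ad bc bd cd) ?_ ?_ ?_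
  · have hc := h.comm _ _ _ _ ab ac ad bc bd cd
    simp only [bT]
    generalize bpt N (2*i) = a at *
    generalize bpt N (2*i+1) = b at *
    generalize bpt N (2*j) = c at *
    generalize bpt N (2*j+1) = d at *
    rw [← mul_assoc, h.conj _ _ _ ab, mul_assoc, h.conj _ _ _ cd, ← mul_assoc, hc]
    congr 1
    have ea : (swap a c * swap b d) a = c := by
      simp only [Perm.mul_apply, swap_apply_def]; grind
    have eb : (swap a c * swap b d) b = d := by
      simp only [Perm.mul_apply, swap_apply_def]; grind
    have ec : (swap a c * swap b d) c = a := by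
      simp only [Perm.mul_apply, swap_apply_def]; grind
    have ed : (swap a c * swap b d) d = b := by
      simp only [Perm.mul_apply, swap_apply_def]; grind
    rw [ea, eb, ec, ed]
  · rw [mul_assoc, bdel_absorb h k hk j hj, bdel_absorb h k hk i hi]
  · rw [← mul_assoc, bdel_absorb' h k hk i hi, bdel_absorb' h k hk j hj]

theorem bdel_fix (h : BTh φ th) (k : ℕ) (hk : 2 * k ≤ N + 1) (g : Perm (Fin (N+1)))
    (hg : ∀ i, i < 2 * k → g (bpt N i) = bpt N i) : φ g * bdel th k = bdel th k * φ g := by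
  apply bdel_comm
  intro i hi
  rw [bT, h.conj _ _ _ (bpt_ne (by omega) (by omega) (by omega)), hg _ (by omega), hg _ (by omega)]

def beF (N k : ℕ) : (Fin k × Bool) ⊕ Fin (N + 1 - 2 * k) → Fin (N+1)
  | Sum.inl (i, b) => bpt N (2 * i.val + b.toNat)
  | Sum.inr j => bpt N (2 * k + j.val)

theorem beF_inj (N k : ℕ) (hk : 2 * k ≤ N + 1) : Function.Injective (beF N k) := by
  have hb : ∀ b : Bool, b.toNat < 2 := by decide
  have hbi : ∀ b c : Bool, b.toNat = c.toNat → b = c := by decide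
  rintro (⟨i, b⟩ | i) (⟨j, c⟩ | j) e
  · have := congrArg Fin.val e
    have h1 := hb b
    have h2 := hb c
    have h3 := i.2
    have h4 := j.2
    simp only [beF] at this
    rw [bpt_val (by omega), bpt_val (by omega)] at this
    have e1 : i = j := Fin.ext (by omega)
    have e2 : b = c := hbi _ _ (by omega)
    rw [e1, e2]
  · have := congrArg Fin.val e
    have h1 := hb b
    have h3 := i.2
    have h4 := j.2
    simp only [beF] at this
    rw [bpt_val (by omega), bpt_val (by omega)] at this
    omega
  · have := congrArg Fin.val e
    have h1 := hb c
    have h3 := i.2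
    have h4 := j.2
    simp only [beF] at this
    rw [bpt_val (by omega), bpt_val (by omega)] at this
    omega
  · have := congrArg Fin.val e
    have h3 := i.2
    have h4 := j.2
    simp only [beF] at this
    rw [bpt_val (by omega), bpt_val (by omega)] at this
    have e1 : i = j := Fin.ext (by omega)
    rw [e1]

noncomputable def be (N k : ℕ) (hk : 2 * k ≤ N + 1) :
    (Fin k × Bool) ⊕ Fin (N + 1 - 2 * k) ≃ Fin (N+1) :=
  Equiv.ofBijective (beF N k) (by
    rw [Fintype.bijective_iff_injective_and_card]
    refine ⟨beF_inj N k hk, ?_⟩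
    simp
    omega)

noncomputable def bPsi (N k : ℕ) (hk : 2 * k ≤ N + 1) :
    Perm (Fin k × Bool) × Perm (Fin (N + 1 - 2 * k)) →* Perm (Fin (N+1)) :=
  (be N k hk).permCongrHom.toMonoidHom.comp (Perm.sumCongrHom _ _)

theorem bPsi_inj (N k : ℕ) (hk : 2 * k ≤ N + 1) : Function.Injective (bPsi N k hk) := by
  intro x y e
  exact Perm.sumCongrHom_injective ((be N k hk).permCongrHom.injective e)

theorem bPsi_apply (N k : ℕ) (hk : 2 * k ≤ N + 1) (p q y) :
    bPsi N k hk (p, q) (be N k hk y) = be N k hk (Sum.map p q y) := by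
  simp [bPsi, Equiv.permCongrHom, Equiv.permCongr_apply]

theorem bPsi_shear (h : BTh φ th) (k : ℕ) (hk : 2 * k ≤ N + 1) (π : Perm (Fin k))
    (f : Fin k → Perm Bool) :
    bPsi N k hk (Equiv.prodShear π f, 1) ∈ bLR φ (bdel th k) := by
  classical
  let W : Subgroup (Perm (Fin k × Bool)) :=
    ((bLR φ (bdel th k)).comap (bPsi N k hk)).comap (MonoidHom.inl _ _)
  have hW : ∀ x, x ∈ W ↔ bPsi N k hk (x, 1) ∈ bLR φ (bdel th k) := fun x => Iff.rfl
  have hsw : ∀ a b y, swap (be N k hk a) (be N k hk b) (be N k hk y) = be N k hk (swap a b y) := by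
    intro a b y
    exact ((be N k hk).injective.map_swap a b y).symm
  have e0 : ∀ i : Fin k, bpt N (2 * i.val) = be N k hk (Sum.inl (i, false)) := fun i => rfl
  have e1 : ∀ i : Fin k, bpt N (2 * i.val + 1) = be N k hk (Sum.inl (i, true)) := fun i => rfl
  have hA : ∀ π : Perm (Fin k), Equiv.prodShear π (fun _ => (1 : Perm Bool)) ∈ W := by
    intro π
    induction π using Perm.swap_induction_on with
    | one => exact W.one_mem
    | swap_mul g x y hxy ih =>
      have : Equiv.prodShear (swap x y * g) (fun _ => (1 : Perm Bool))
        = Equiv.prodShear (swap x y) (fun _ => (1 : Perm Bool)) *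
          Equiv.prodShear g (fun _ => (1 : Perm Bool)) := by
        ext z <;> rfl
      rw [this]
      refine W.mul_mem ?_ ih
      rw [hW]
      have := bLR_block h k hk x y x.2 y.2 (fun e => hxy (Fin.ext e))
      convert this using 1
      ext z
      obtain ⟨z, rfl⟩ := (be N k hk).surjective z
      rw [bPsi_apply, e0, e0, e1, e1, Perm.mul_apply, hsw, hsw]
      congr 2
      rcases z with ⟨i, b⟩ | z
      · by_cases hx : i = x
        · subst hx
          rcases b <;> simp [swap_apply_def]
        · by_cases hy : i = y
          · subst hy
            rcases b <;> simp [swap_apply_def, hxy.symm]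
          · rcases b <;> simp [swap_apply_def, hx, hy]
      · simp [swap_apply_def]
  have hB : ∀ f : Fin k → Perm Bool, Equiv.prodShear (1 : Perm (Fin k)) f ∈ W := by
    let F : (Fin k → Perm Bool) →* Perm (Fin k × Bool) := MonoidHom.mk'
      (fun f => Equiv.prodShear (1 : Perm (Fin k)) f) (by intro a b; ext z <;> rfl)
    intro f
    have : f ∈ W.comap F := by
      apply Subgroup.pi_mem_of_mulSingle_mem
      intro i
      have hq : ∀ q : Perm Bool, q = 1 ∨ q = swap false true := by decide
      rcases hq (f i) with e | e
      · rw [e, Pi.mulSingle_one]; exact Subgroup.one_mem _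
      · rw [e]
        change bPsi N k hk (Equiv.prodShear (1 : Perm (Fin k)) _, 1) ∈ bLR φ (bdel th k)
        have := bLR_flip h k hk i i.2
        convert this using 1
        ext z
        obtain ⟨z, rfl⟩ := (be N k hk).surjective z
        rw [bPsi_apply, e0, e1, hsw]
        congr 2
        rcases z with ⟨j, b⟩ | z
        · by_cases hj : j = i
          · subst hj
            rcases b <;> simp [swap_apply_def]
          · rcases b <;> simp [swap_apply_def, hj]
        · simp [swap_apply_def]
    exact this
  have : Equiv.prodShear π f = Equiv.prodShear π (fun _ => (1 : Perm Bool)) *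
      Equiv.prodShear (1 : Perm (Fin k)) f := by
    ext z <;> rfl
  rw [← hW, this]
  exact W.mul_mem (hA π) (hB f)

theorem bPsi_fix (h : BTh φ th) (k : ℕ) (hk : 2 * k ≤ N + 1) (p) :
    φ (bPsi N k hk (1, p)) * bdel th k = bdel th k * φ (bPsi N k hk (1, p)) := by
  apply bdel_fix h k hk
  intro i hi
  have : bpt N i = be N k hk (Sum.inl (⟨i / 2, by omega⟩, decide (i % 2 = 1))) := by
    change _ = bpt N (2 * (i/2) + _)
    congr 1
    rcases Nat.mod_two_eq_zero_or_one i with e | e <;> simp [e] <;> omega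
  rw [this, bPsi_apply]
  simp

def bI (φ : Perm (Fin (N+1)) →* M) (d : M) : Set M := {x | ∃ g h, x = φ g * d * φ h}

theorem bI_finite (φ : Perm (Fin (N+1)) →* M) (d : M) : (bI φ d).Finite := by
  have : bI φ d = Set.range (fun p : Perm (Fin (N+1)) × Perm (Fin (N+1)) => φ p.1 * d * φ p.2) := by
    ext x
    constructor
    · rintro ⟨g, h, rfl⟩; exact ⟨(g, h), rfl⟩
    · rintro ⟨⟨g, h⟩, rfl⟩; exact ⟨g, h, rfl⟩
  rw [this]
  exact Set.finite_range _

theorem bI_card (h : BTh φ th) (k : ℕ) (hk : 2 * k ≤ N + 1) :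
    (bI φ (bdel th k)).ncard ≤ (N+1).factorial ^ 2 /
      (2 ^ (2 * k) * k.factorial ^ 2 * (N + 1 - 2 * k).factorial) := by
  classical
  rw [Nat.le_div_iff_mul_le (by positivity)]
  let P := Perm (Fin (N+1))
  let Q := Perm (Fin k) × (Fin k → Perm Bool)
  let V := Q × Q × Perm (Fin (N + 1 - 2 * k))
  let A : V → P := fun v => bPsi N k hk (Equiv.prodShear v.1.1 v.1.2, v.2.2)
  let B : V → P := fun v => bPsi N k hk (Equiv.prodShear v.2.1.1 v.2.1.2, v.2.2⁻¹)
  have hAB : ∀ v, φ (A v) * bdel th k * φ (B v) = bdel th k := by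
    rintro ⟨⟨π, f⟩, ⟨ρ, g⟩, p⟩
    have eA : A ⟨⟨π, f⟩, ⟨ρ, g⟩, p⟩ = bPsi N k hk (Equiv.prodShear π f, 1) * bPsi N k hk (1, p) := by
      rw [← map_mul]; simp [A]
    have eB : B ⟨⟨π, f⟩, ⟨ρ, g⟩, p⟩ = (bPsi N k hk (1, p))⁻¹ * bPsi N k hk (Equiv.prodShear ρ g, 1) := by
      rw [← map_inv, ← map_mul]; simp [B]
    rw [eA, eB, map_mul, map_mul, mul_assoc (φ _), bPsi_fix h k hk p,
      ← mul_assoc (φ (bPsi N k hk (Equiv.prodShear π f, 1))),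
      (bPsi_shear h k hk π f).1, mul_assoc, ← mul_assoc (φ _) (φ _), bphi_inv, one_mul,
      (bPsi_shear h k hk ρ g).2]
  have shinj : ∀ (π ρ : Perm (Fin k)) (f g : Fin k → Perm Bool),
      Equiv.prodShear π f = Equiv.prodShear ρ g → π = ρ ∧ f = g := by
    intro π ρ f g e
    constructor
    · ext i
      have := congrArg Prod.fst (Equiv.congr_fun e (i, false))
      exact congrArg Fin.val this
    · funext i
      ext b
      have := congrArg Prod.snd (Equiv.congr_fun e (i, b))
      simpa using this
  have hinj : ∀ v w, A v = A w → B v = B w → v = w := by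
    rintro ⟨⟨π, f⟩, ⟨ρ, g⟩, p⟩ ⟨⟨π', f'⟩, ⟨ρ', g'⟩, p'⟩ e1 e2
    have e1' := Prod.ext_iff.1 (bPsi_inj N k hk e1)
    have e2' := Prod.ext_iff.1 (bPsi_inj N k hk e2)
    simp only at e1' e2'
    obtain ⟨rfl, rfl⟩ := shinj _ _ _ _ e1'.1
    obtain ⟨rfl, rfl⟩ := shinj _ _ _ _ e2'.1
    rw [e1'.2]
  have hch : ∀ x : bI φ (bdel th k), ∃ q : P × P, x.1 = φ q.1 * bdel th k * φ q.2 := by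
    rintro ⟨x, g, h, rfl⟩
    exact ⟨(g, h), rfl⟩
  choose q hq using hch
  let F : bI φ (bdel th k) × V → P × P := fun y => ((q y.1).1 * A y.2, B y.2 * (q y.1).2)
  have hF : ∀ y, y.1.1 = φ (F y).1 * bdel th k * φ (F y).2 := by
    rintro ⟨x, v⟩
    simp only [F, map_mul]
    rw [hq x]
    conv_lhs => rw [← hAB v]
    simp only [mul_assoc]
  have hFi : Function.Injective F := by
    rintro ⟨x, v⟩ ⟨y, w⟩ e
    have h1 := hF (x, v)
    have h2 := hF (y, w)
    rw [e, ← h2] at h1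
    have hxy : x = y := Subtype.ext h1
    subst hxy
    have e' := Prod.ext_iff.1 e
    simp only [F] at e'
    rw [hinj v w (mul_left_cancel e'.1) (mul_right_cancel e'.2)]
  have := Nat.card_le_card_of_injective F hFi
  have e1 : Nat.card (bI φ (bdel th k) × V) = Nat.card (bI φ (bdel th k)) * Nat.card V :=
    Nat.card_prod _ _
  have e2 : Nat.card (P × P) = Nat.card P * Nat.card P := Nat.card_prod _ _
  have hP : Nat.card P = (N+1).factorial := by
    rw [Nat.card_perm, Nat.card_fin]
  have hQ1 : Nat.card (Fin k → Perm Bool) = 2 ^ k := by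
    rw [Nat.card_fun, Nat.card_perm, Nat.card_eq_fintype_card, Fintype.card_bool, Nat.card_fin]
    rfl
  have hQ : Nat.card Q = k.factorial * 2 ^ k := by
    have : Nat.card Q = Nat.card (Perm (Fin k)) * Nat.card (Fin k → Perm Bool) := Nat.card_prod _ _
    rw [this, hQ1, Nat.card_perm, Nat.card_fin]
  have hR : Nat.card (Perm (Fin (N + 1 - 2 * k))) = (N + 1 - 2 * k).factorial := by
    rw [Nat.card_perm, Nat.card_fin]
  have hV : Nat.card V = 2 ^ (2 * k) * k.factorial ^ 2 * (N + 1 - 2 * k).factorial := by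
    have : Nat.card V = Nat.card Q * (Nat.card Q * Nat.card (Perm (Fin (N + 1 - 2 * k)))) := by
      rw [← Nat.card_prod, ← Nat.card_prod]
    rw [this, hQ, hR, two_mul, pow_add]
    ring
  rw [e1, e2, hP, hV, Nat.card_coe_set_eq, ← sq] at this
  exact this

def bU (φ : Perm (Fin (N+1)) →* M) (th : Fin (N+1) → Fin (N+1) → M) : Set M :=
  ⋃ k ∈ Finset.range ((N+1) / 2 + 1), bI φ (bdel th k)

theorem bU_mem {x : M} : x ∈ bU φ th ↔ ∃ k, 2 * k ≤ N + 1 ∧ ∃ g h, x = φ g * bdel th k * φ h := by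
  simp only [bU, Set.mem_iUnion, Finset.mem_range, exists_prop, bI, Set.mem_ofPred_eq]
  constructor
  · rintro ⟨k, hk, h⟩; exact ⟨k, by omega, h⟩
  · rintro ⟨k, hk, h⟩; exact ⟨k, by omega, h⟩

theorem bU_mul {x : M} (hx : x ∈ bU φ th) (a b) : φ a * x * φ b ∈ bU φ th := by
  rw [bU_mem] at hx ⊢
  obtain ⟨k, hk, g, h, rfl⟩ := hx
  exact ⟨k, hk, a * g, h * b, by simp only [map_mul, mul_assoc]⟩

theorem bU_case (h : BTh φ th) (k : ℕ) (hk : 2 * k ≤ N + 1) (a b : Fin (N+1)) (hab : a ≠ b)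
    (ha : a.val < 2 * k) : th a b * bdel th k ∈ bU φ th := by
  obtain ⟨c, hac, hd⟩ : ∃ c, a ≠ c ∧ th c a * bdel th k = bdel th k := by
    have hne : bpt N (2 * (a.val / 2)) ≠ bpt N (2 * (a.val / 2) + 1) :=
      bpt_ne (by omega) (by omega) (by omega)
    have := bdel_absorb h k hk (a.val / 2) (by omega)
    rw [bT] at this
    rcases Nat.mod_two_eq_zero_or_one a.val with e | e
    · have e' : bpt N (2 * (a.val / 2)) = a := by
        rw [show 2 * (a.val / 2) = a.val by omega, bpt_self]
      rw [e'] at this hne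
      exact ⟨_, hne, by rw [h.symm _ _ hne.symm]; exact this⟩
    · have e' : bpt N (2 * (a.val / 2) + 1) = a := by
        rw [show 2 * (a.val / 2) + 1 = a.val by omega, bpt_self]
      rw [e'] at this hne
      exact ⟨_, hne.symm, this⟩
  rw [bU_mem]
  refine ⟨k, hk, ?_⟩
  by_cases hbc : b = c
  · subst hbc
    exact ⟨1, 1, by rw [h.symm _ _ hab, hd]; simp⟩
  · refine ⟨swap c a * swap a b, 1, ?_⟩
    rw [map_one, mul_one]
    conv_lhs => rw [← hd, ← mul_assoc, h.chain c a b hac.symm (Ne.symm hbc) hab, mul_assoc, hd]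

theorem bU_th (h : BTh φ th) (k : ℕ) (hk : 2 * k ≤ N + 1) (a b : Fin (N+1)) (hab : a ≠ b) :
    th a b * bdel th k ∈ bU φ th := by
  by_cases ha : a.val < 2 * k
  · exact bU_case h k hk a b hab ha
  by_cases hb : b.val < 2 * k
  · rw [h.symm a b hab]
    exact bU_case h k hk b a hab.symm hb
  have hv : a.val ≠ b.val := fun e => hab (Fin.ext e)
  have hk1 : 2 * (k+1) ≤ N + 1 := by omega
  set u := bpt N (2*k) with hu
  set v := bpt N (2*k+1) with hv
  have huv : u ≠ v := bpt_ne (by omega) (by omega) (by omega)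
  have huval : u.val = 2 * k := bpt_val (by omega)
  have hvval : v.val = 2 * k + 1 := bpt_val (by omega)
  let g : Perm (Fin (N+1)) := swap u a * swap v (swap u a b)
  have gv : g v = b := by simp [g]
  have gu : g u = a := by
    simp only [g, Perm.mul_apply, swap_apply_def]; grind
  have gfix : ∀ i, i < 2 * k → g (bpt N i) = bpt N i := by
    intro i hi
    have hival : (bpt N i).val = i := bpt_val (by omega)
    have h1 : bpt N i ≠ u := fun e => by rw [e] at hival; omega
    have h2 : bpt N i ≠ v := fun e => by rw [e] at hival; omega
    have h3 : bpt N i ≠ a := fun e => by rw [e] at hival; omega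
    have h4 : bpt N i ≠ b := fun e => by rw [e] at hival; omega
    simp only [g, Perm.mul_apply, swap_apply_def]; grind
  have hc := h.conj g u v huv
  rw [gu, gv] at hc
  have hc' : th a b = φ g * th u v * φ g⁻¹ := by rw [hc, mul_assoc, bphi_inv, mul_one]
  rw [bU_mem]
  refine ⟨k+1, hk1, g, g⁻¹, ?_⟩
  have hf : φ g⁻¹ * bdel th k = bdel th k * φ g⁻¹ := by
    apply bdel_fix h k hk
    intro i hi
    rw [Perm.inv_eq_iff_eq, gfix i hi]
  have hTk : th u v * bdel th k = bdel th k * th u v :=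
    bdel_comm k (bT th k) (fun j hj => bT_comm h _ _ (by omega) (by omega))
  rw [hc', mul_assoc, hf, bdel, bT, ← hu, ← hv, ← hTk]
  simp only [mul_assoc]

theorem bU_card (h : BTh φ th) : (bU φ th).Finite ∧ (bU φ th).ncard ≤
    ∑ k ∈ Finset.range ((N+1) / 2 + 1), (N+1).factorial ^ 2 /
      (2 ^ (2 * k) * k.factorial ^ 2 * (N + 1 - 2 * k).factorial) := by
  constructor
  · exact Set.Finite.biUnion (Finset.finite_toSet _) (fun k _ => bI_finite φ _)
  · refine (Finset.set_ncard_biUnion_le _ _).trans (Finset.sum_le_sum fun k hk => ?_)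
    rw [Finset.mem_range] at hk
    exact bI_card h k (by omega)

end bdelta

def bS {n : ℕ} (i : ℕ) : BrauerMonoid n := if h : i < n - 1 then σB ⟨i, h⟩ else 1
def bθ {n : ℕ} (i : ℕ) : BrauerMonoid n := if h : i < n - 1 then θB ⟨i, h⟩ else 1

theorem brel_eq {n : ℕ} {a b : FreeMonoid (BrauerGen n)} (h : BrauerRel n a b) :
    PresentedMonoid.mk (BrauerRel n) a = PresentedMonoid.mk (BrauerRel n) b :=
  PresentedMonoid.mk_eq_mk_of_rel h

theorem bmk_s {n : ℕ} (i : Fin (n-1)) :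
    PresentedMonoid.mk (BrauerRel n) (fσ i) = bS i.val := by
  simp [bS, σB, fσ, PresentedMonoid.of]

theorem bmk_t {n : ℕ} (i : Fin (n-1)) :
    PresentedMonoid.mk (BrauerRel n) (fθ i) = bθ i.val := by
  simp [bθ, θB, fθ, PresentedMonoid.of]

theorem bBRel (n : ℕ) : BRel (n - 1) (bS (n := n)) bθ where
  sq i hi := by
    simpa only [map_mul, map_one, bmk_s, bmk_t] using brel_eq (BrauerRel.sigma_sq (n := n) ⟨i, hi⟩)
  comm i j h1 hj := by
    simpa only [map_mul, map_one, bmk_s, bmk_t] using brel_eq (BrauerRel.sigma_comm (n := n)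
      ⟨i, by omega⟩ ⟨j, hj⟩ (by simp only [Nat.dist]; omega))
  braid i hi := by
    simpa only [map_mul, map_one, bmk_s, bmk_t] using brel_eq (BrauerRel.braid (n := n)
      ⟨i, by omega⟩ ⟨i+1, hi⟩ (by simp only [Nat.dist]; omega))
  tt i hi := by
    simpa only [map_mul, map_one, bmk_s, bmk_t] using brel_eq (BrauerRel.theta_idem (n := n) ⟨i, hi⟩)
  tc i j h1 hj := by
    simpa only [map_mul, map_one, bmk_s, bmk_t] using brel_eq (BrauerRel.theta_comm (n := n)
      ⟨i, by omega⟩ ⟨j, hj⟩ (by simp only [Nat.dist]; omega))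
  ts i hi := by
    simpa only [map_mul, map_one, bmk_s, bmk_t] using brel_eq (BrauerRel.theta_sigma (n := n) ⟨i, hi⟩)
  st i hi := by
    simpa only [map_mul, map_one, bmk_s, bmk_t] using brel_eq (BrauerRel.sigma_theta (n := n) ⟨i, hi⟩)
  tsc i j h1 hi hj := by
    simpa only [map_mul, map_one, bmk_s, bmk_t] using brel_eq (BrauerRel.theta_sigma_comm (n := n)
      ⟨i, hi⟩ ⟨j, hj⟩ (by simp only [Nat.dist]; omega))
  ttt i j h1 hi hj := by
    simpa only [map_mul, map_one, bmk_s, bmk_t] using brel_eq (BrauerRel.theta_theta_theta (n := n)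
      ⟨i, hi⟩ ⟨j, hj⟩ (by simp only [Nat.dist]; omega))
  stt i j h1 hi hj := by
    simpa only [map_mul, map_one, bmk_s, bmk_t] using brel_eq (BrauerRel.sigma_theta_theta (n := n)
      ⟨i, hi⟩ ⟨j, hj⟩ (by simp only [Nat.dist]; omega))
  tts i j h1 hi hj := by
    simpa only [map_mul, map_one, bmk_s, bmk_t] using brel_eq (BrauerRel.theta_theta_sigma (n := n)
      ⟨i, hi⟩ ⟨j, hj⟩ (by simp only [Nat.dist]; omega))

theorem bU_top {n : ℕ} (U : Set (BrauerMonoid n)) (h1 : 1 ∈ U)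
    (hs : ∀ i, i < n - 1 → ∀ x ∈ U, bS i * x ∈ U) (ht : ∀ i, i < n - 1 → ∀ x ∈ U, bθ i * x ∈ U) :
    U = Set.univ := by
  rw [Set.eq_univ_iff_forall]
  intro x
  have hx : x ∈ Submonoid.closure (Set.range (PresentedMonoid.of (BrauerRel n))) := by
    rw [PresentedMonoid.closure_range_of]; trivial
  induction hx using Submonoid.closure_induction_left with
  | one => exact h1
  | mul_left x hx y hy ih =>
    obtain ⟨i | i, rfl⟩ := hx
    · have := hs i i.2 y ih
      simpa [bS, σB] using this
    · have := ht i i.2 y ih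
      simpa [bθ, θB] using this

theorem brauer_main (N : ℕ) (hN : 0 < N) : Finite (BrauerMonoid (N+1)) ∧
    Nat.card (BrauerMonoid (N+1)) ≤
    ∑ k ∈ Finset.range ((N+1) / 2 + 1), (N+1).factorial ^ 2 /
      (2 ^ (2 * k) * k.factorial ^ 2 * (N + 1 - 2 * k).factorial) := by
  have hR : BRel N (bS (n := N+1)) bθ := bBRel (N+1)
  obtain ⟨φ, hφ⟩ := bhom_exists hR.toBCox
  have hT := bth_BTh hR hN φ hφ
  obtain ⟨hf, hc⟩ := bU_card hT
  have hU : bU φ (bth φ (bθ 0)) = Set.univ := by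
    apply bU_top
    · rw [bU_mem]
      exact ⟨0, by omega, 1, 1, by simp [bdel]⟩
    · intro i hi x hx
      rw [← hφ i hi]
      have := bU_mul hx (bsw N i) 1
      rwa [map_one, mul_one] at this
    · intro i hi x hx
      have hi' : i < N := hi
      rw [bU_mem] at hx
      obtain ⟨k, hk, g, h, rfl⟩ := hx
      have hne : bpt N i ≠ bpt N (i+1) := bpt_ne (by omega) (by omega) (by omega)
      have hne' : g⁻¹ (bpt N i) ≠ g⁻¹ (bpt N (i+1)) := fun e => hne (g⁻¹.injective e)
      have hc := hT.conj g _ _ hne'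
      have hgg : ∀ y, g (g⁻¹ y) = y := fun y => Equiv.apply_symm_apply g y
      rw [hgg, hgg, bth_t hR hN φ hφ i hi'] at hc
      rw [← mul_assoc, ← mul_assoc, ← hc, mul_assoc (φ g)]
      exact bU_mul (bU_th hT k hk _ _ hne') g h
  rw [hU] at hf hc
  rw [Set.ncard_univ] at hc
  exact ⟨Set.finite_univ_iff.1 hf, hc⟩

end BrauerAux

/-- Corollary `corollary31` of Kudryavtseva–Mazorchuk: the monoid `T` is finite and
`|T| ≤ Σ_{k=0}^{⌊n/2⌋} (n!)² / (2^{2k} (k!)² (n-2k)!)`. -/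
theorem brauer_card_le (n : ℕ) (hn : 1 ≤ n) :
    Finite (BrauerMonoid n) ∧
      Nat.card (BrauerMonoid n) ≤
        ∑ k ∈ Finset.range (n / 2 + 1),
          n.factorial ^ 2 / (2 ^ (2 * k) * k.factorial ^ 2 * (n - 2 * k).factorial) := by
  obtain ⟨N, rfl⟩ : ∃ N, n = N + 1 := ⟨n - 1, by omega⟩
  rcases Nat.eq_zero_or_pos N with rfl | hN
  · have h1 : ({1} : Set (BrauerMonoid (0+1))) = Set.univ :=
      bU_top _ rfl (fun i hi => absurd hi (by omega)) (fun i hi => absurd hi (by omega))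
    constructor
    · exact Set.finite_univ_iff.1 (h1 ▸ Set.finite_singleton 1)
    · rw [← Set.ncard_univ, ← h1, Set.ncard_singleton]
      simp
  · exact brauer_main N hN
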